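/- In the graded setting described in the context, let E ∈ A₀ be invertible, let f, p ∈ A₀, let h be the 2×2 matrix over A₀ with rows (1, p) and (f, f·p + E), and set Θ = ∂̄(h^{−1}·∂h), a 2×2 matrix with entries in A₂. Then trace(Θ·Θ) − (∂̄(E^{−1}·∂E))² = 2·∂̄(∂(E^{−1}·∂f·∂̄p)). -/

import Mathlib

/-!
Factor `h = g u` with `g = !![1, 0; f, E]` and `u = !![1, p; 0, 1]`. Conjugating by `u`, whose
entries are central, turns the curvature `Θ` into a matrix `Φ` with entries of degree two. These
commute, so `trace (Φ * Φ) = (trace Φ) ^ 2 - 2 * det Φ`. The trace of `Φ` is exactly the curvature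
`∂̄(E⁻¹ ∂E)` of the quotient line bundle, and `-det Φ` agrees with `∂̄∂(E⁻¹ ∂f ∂̄p)` up to
the square of the form `E⁻¹ ∂f ∂̄p`, which is killed by `2`.
-/

open Matrix

section TraceNoncomm

variable {m n R : Type*} [Fintype m] [Fintype n]

theorem trace_mul_comm_of_commute [NonUnitalNonAssocSemiring R] {M : Matrix m n R}
    {N : Matrix n m R} (h : ∀ i j, Commute (M i j) (N j i)) :
    trace (M * N) = trace (N * M) := by
  simp only [trace, diag_apply, mul_apply]
  rw [Finset.sum_comm]
  exact Finset.sum_congr rfl fun j _ => Finset.sum_congr rfl fun i _ => h i j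

theorem trace_units_conj_of_commute [DecidableEq n] [Semiring R] (u : (Matrix n n R)ˣ)
    (hu : ∀ i j x, Commute ((u : Matrix n n R) i j) x) (M : Matrix n n R) :
    trace ((↑u⁻¹ : Matrix n n R) * M * (u : Matrix n n R)) = trace M := by
  rw [← trace_mul_comm_of_commute (M := (u : Matrix n n R)) fun i j => hu i j _,
    u.mul_inv_cancel_left]

theorem trace_sq_fin_two [Ring R] {M : Matrix (Fin 2) (Fin 2) R}
    (hdiag : Commute (M 0 0) (M 1 1)) (hoff : Commute (M 0 1) (M 1 0)) :
    trace (M ^ 2) = trace M ^ 2 - 2 * (M 0 0 * M 1 1 - M 0 1 * M 1 0) := by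
  simp only [trace_fin_two, mul_apply, Fin.sum_univ_two, pow_two, add_mul, mul_add, hdiag.eq,
    hoff.eq]
  noncomm_ring

end TraceNoncomm

theorem fin_two_mem_matrix {R : Type*} [AddMonoid R] {S : AddSubmonoid R} {a b c d : R} (ha : a ∈ S)
    (hb : b ∈ S) (hc : c ∈ S) (hd : d ∈ S) : !![a, b; c, d] ∈ S.matrix := by
  intro i j
  fin_cases i <;> fin_cases j <;> assumption

section GradedCommutative

variable {A σ : Type*} [Ring A] [SetLike σ A] {𝒜 : ℕ → σ} {m n : ℕ} {x y : A}

/-- The sign rule `x y = (-1) ^ (deg x * deg y) y x` for the homogeneous elements of a graded ring.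
In odd degree it only gives `2 * (x * x) = 0`, not `x * x = 0`. -/
def IsGradedCommutative (𝒜 : ℕ → σ) : Prop :=
  ∀ ⦃m n : ℕ⦄ ⦃x y : A⦄, x ∈ 𝒜 m → y ∈ 𝒜 n → x * y = ((-1 : ℤ) ^ (m * n)) • (y * x)

namespace IsGradedCommutative

theorem commute_of_even [AddSubmonoidClass σ A] [DirectSum.Decomposition 𝒜]
    (hcomm : IsGradedCommutative 𝒜) (hm : Even m) (hx : x ∈ 𝒜 m) (y : A) : Commute x y := by
  induction y using DirectSum.Decomposition.inductionOn 𝒜 with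
  | zero => exact Commute.zero_right x
  | homogeneous y => simpa [(hm.mul_right _).neg_one_pow, commute_iff_eq] using hcomm hx y.2
  | add y z hy hz => exact hy.add_right hz

theorem mul_eq_neg_mul_of_odd (hcomm : IsGradedCommutative 𝒜) (hm : Odd m) (hn : Odd n)
    (hx : x ∈ 𝒜 m) (hy : y ∈ 𝒜 n) : x * y = -(y * x) := by
  simpa [(hm.mul hn).neg_one_pow] using hcomm hx hy

theorem two_mul_mul_self_of_odd (hcomm : IsGradedCommutative 𝒜) (hm : Odd m) (hx : x ∈ 𝒜 m) :
    2 * (x * x) = 0 := by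
  rw [two_mul, add_eq_zero_iff_eq_neg]
  exact hcomm.mul_eq_neg_mul_of_odd hm hm hx hx

theorem two_mul_mul_mul_self_of_odd (hcomm : IsGradedCommutative 𝒜) (hm : Odd m) (hn : Odd n)
    (hx : x ∈ 𝒜 m) (hy : y ∈ 𝒜 n) : 2 * (x * y * (x * y)) = 0 := by
  calc 2 * (x * y * (x * y)) = 2 * (x * (y * x) * y) := by simp only [mul_assoc]
    _ = -(2 * (x * x) * (y * y)) := by
      rw [hcomm.mul_eq_neg_mul_of_odd hn hm hy hx]
      noncomm_ring
    _ = 0 := by rw [hcomm.two_mul_mul_self_of_odd hm hx, zero_mul, neg_zero]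

end IsGradedCommutative

theorem coe_units_inv_mem_zero {ι : Type*} [AddMonoid ι] [DecidableEq ι] [AddSubmonoidClass σ A]
    (𝒜 : ι → σ) [GradedRing 𝒜] {u : Aˣ} (hu : (u : A) ∈ 𝒜 0) : (↑u⁻¹ : A) ∈ 𝒜 0 := by
  have hmul : (u : A) * (DirectSum.decompose 𝒜 (↑u⁻¹ : A) 0 : A) = 1 := by
    rw [← DirectSum.coe_decompose_mul_of_left_mem_zero 𝒜 hu, u.mul_inv,
      DirectSum.decompose_of_mem_same 𝒜 SetLike.GradedOne.one_mem]
  rw [Units.inv_eq_of_mul_eq_one_right hmul]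
  exact SetLike.coe_mem _

end GradedCommutative

/-- A derivation of degree `+1` of a graded ring, with the Koszul sign in its Leibniz rule. -/
structure IsGradedDerivation {A σ : Type*} [Ring A] [SetLike σ A] (𝒜 : ℕ → σ) (d : A →+ A) :
    Prop where
  map_mem : ∀ {m : ℕ} {x : A}, x ∈ 𝒜 m → d x ∈ 𝒜 (m + 1)
  leibniz : ∀ {m : ℕ} {x y : A}, x ∈ 𝒜 m → d (x * y) = d x * y + ((-1 : ℤ) ^ m) • (x * d y)

namespace IsGradedDerivation

variable {A σ : Type*} [Ring A] [SetLike σ A] {𝒜 : ℕ → σ} {d : A →+ A} {x : A}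

theorem map_mul_of_mem_zero (hd : IsGradedDerivation 𝒜 d) (hx : x ∈ 𝒜 0) (y : A) :
    d (x * y) = d x * y + x * d y := by
  simpa using hd.leibniz (y := y) hx

theorem map_mul_of_mem_one (hd : IsGradedDerivation 𝒜 d) (hx : x ∈ 𝒜 1) (y : A) :
    d (x * y) = d x * y - x * d y := by
  simpa [sub_eq_add_neg] using hd.leibniz (y := y) hx

theorem map_one [SetLike.GradedOne 𝒜] (hd : IsGradedDerivation 𝒜 d) : d 1 = 0 := by
  simpa using hd.map_mul_of_mem_zero SetLike.GradedOne.one_mem 1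

theorem map_units_inv (hd : IsGradedDerivation 𝒜 d) {u : Aˣ} (hu : (u : A) ∈ 𝒜 0)
    (hu' : (↑u⁻¹ : A) ∈ 𝒜 0) : d ↑u⁻¹ = -(↑u⁻¹ * d u * ↑u⁻¹) := by
  have hexpand : d ↑u⁻¹ = d ↑u⁻¹ + (↑u⁻¹ * d u * ↑u⁻¹ + d ↑u⁻¹) := by
    conv_lhs => rw [← mul_one (↑u⁻¹ : A), ← u.mul_inv]
    rw [hd.map_mul_of_mem_zero hu', hd.map_mul_of_mem_zero hu, mul_add, u.mul_inv, mul_one,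
      u.inv_mul_cancel_left, mul_assoc]
  exact eq_neg_of_add_eq_zero_right (left_eq_add.mp hexpand)

theorem map_units_conj (hd : IsGradedDerivation 𝒜 d) {u : Aˣ} (hu : (u : A) ∈ 𝒜 0)
    (hu' : (↑u⁻¹ : A) ∈ 𝒜 0) (hx : x ∈ 𝒜 1) :
    d (↑u⁻¹ * x * u) = ↑u⁻¹ * (d x - (d u * ↑u⁻¹ * x + x * (d u * ↑u⁻¹))) * u := by
  rw [mul_assoc, hd.map_mul_of_mem_zero hu', hd.map_mul_of_mem_one hx, hd.map_units_inv hu hu']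
  simp only [mul_sub, sub_mul, mul_add, add_mul, neg_mul, mul_assoc, u.inv_mul, mul_one]
  abel

theorem mapMatrix [AddSubmonoidClass σ A] {ι : Type*} [Fintype ι] [DecidableEq ι]
    (hd : IsGradedDerivation 𝒜 d) :
    IsGradedDerivation (fun m => (AddSubmonoid.ofClass (𝒜 m)).matrix)
      (d.mapMatrix : Matrix ι ι A →+ Matrix ι ι A) where
  map_mem hM i j := hd.map_mem (hM i j)
  leibniz {m M N} hM := by
    ext i j
    simp only [AddMonoidHom.mapMatrix_apply, map_apply, mul_apply, Matrix.add_apply,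
      Matrix.smul_apply, map_sum, Finset.smul_sum, ← Finset.sum_add_distrib]
    exact Finset.sum_congr rfl fun k _ => hd.leibniz (hM i k)

end IsGradedDerivation

section Chern

variable {A σ : Type*} [Ring A] [SetLike σ A] {𝒜 : ℕ → σ} {D Dbar : A →+ A}

/-- The Chern connection form `h⁻¹ ∂h` of a metric `h`; matrix-valued metrics are covered by taking
a matrix ring for `A`. -/
def chernConnection (D : A →+ A) (h : Aˣ) : A :=
  ↑h⁻¹ * D h

/-- The curvature `∂̄(h⁻¹ ∂h)` of the Chern connection of a metric `h`. -/
def chernCurvature (D Dbar : A →+ A) (h : Aˣ) : A :=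
  Dbar (chernConnection D h)

theorem chernConnection_mem_one [SetLike.GradedMonoid 𝒜] (hD : IsGradedDerivation 𝒜 D) {h : Aˣ}
    (hh : (h : A) ∈ 𝒜 0) (hh' : (↑h⁻¹ : A) ∈ 𝒜 0) : chernConnection D h ∈ 𝒜 1 :=
  SetLike.GradedMul.mul_mem hh' (hD.map_mem hh)

theorem chernConnection_mul (hD : IsGradedDerivation 𝒜 D) {g : Aˣ} (hg : (g : A) ∈ 𝒜 0) (u : Aˣ) :
    chernConnection D (g * u) = ↑u⁻¹ * (chernConnection D g + D u * ↑u⁻¹) * u := by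
  simp only [chernConnection, Units.val_mul, _root_.mul_inv_rev, hD.map_mul_of_mem_zero hg, mul_add,
    add_mul, mul_assoc, Units.inv_mul_cancel_left, u.inv_mul, mul_one]

theorem chernCurvature_mul (hD : IsGradedDerivation 𝒜 D) (hDbar : IsGradedDerivation 𝒜 Dbar)
    {g u : Aˣ} (hg : (g : A) ∈ 𝒜 0) (hu : (u : A) ∈ 𝒜 0) (hu' : (↑u⁻¹ : A) ∈ 𝒜 0) {θ : A}
    (hθ : chernConnection D g + D u * ↑u⁻¹ = θ) (hθ_mem : θ ∈ 𝒜 1) :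
    chernCurvature D Dbar (g * u) =
      ↑u⁻¹ * (Dbar θ - (Dbar u * ↑u⁻¹ * θ + θ * (Dbar u * ↑u⁻¹))) * u := by
  rw [chernCurvature, chernConnection_mul hD hg, hθ, hDbar.map_units_conj hu hu' hθ_mem]

theorem map_units_inv_mul_map (hD : IsGradedDerivation 𝒜 D) (hDD : ∀ x, D (D x) = 0) {E : Aˣ}
    (hE : (E : A) ∈ 𝒜 0) (hE' : (↑E⁻¹ : A) ∈ 𝒜 0) (f : A) :
    D (↑E⁻¹ * D f) = -(chernConnection D E * (↑E⁻¹ * D f)) := by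
  rw [hD.map_mul_of_mem_zero hE', hDD, mul_zero, add_zero, hD.map_units_inv hE hE',
    chernConnection, neg_mul, mul_assoc]

theorem map_map_units_inv_mul_map_mul_map [SetLike.GradedMonoid 𝒜] (hD : IsGradedDerivation 𝒜 D)
    (hDbar : IsGradedDerivation 𝒜 Dbar) (hDD : ∀ x, D (D x) = 0)
    (hDbarDbar : ∀ x, Dbar (Dbar x) = 0) (hDDbar : ∀ x, D (Dbar x) + Dbar (D x) = 0) {E : Aˣ}
    (hE : (E : A) ∈ 𝒜 0) (hE' : (↑E⁻¹ : A) ∈ 𝒜 0) {f : A} (hf : f ∈ 𝒜 0) (p : A) :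
    Dbar (D (↑E⁻¹ * D f * Dbar p)) =
      -(chernCurvature D Dbar E * (↑E⁻¹ * D f * Dbar p)) +
        chernConnection D E * (Dbar (↑E⁻¹ * D f) * Dbar p) +
        Dbar (↑E⁻¹ * D f) * Dbar (D p) := by
  have hb : chernConnection D E ∈ 𝒜 1 := chernConnection_mem_one hD hE hE'
  have ha : ↑E⁻¹ * D f ∈ 𝒜 1 := SetLike.GradedMul.mul_mem hE' (hD.map_mem hf)
  have hswap : D (Dbar p) = -Dbar (D p) := eq_neg_of_add_eq_zero_left (hDDbar p)
  have hinner : D (↑E⁻¹ * D f * Dbar p) =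
      -(chernConnection D E * (↑E⁻¹ * D f * Dbar p)) + ↑E⁻¹ * D f * Dbar (D p) := by
    rw [hD.map_mul_of_mem_one ha, map_units_inv_mul_map hD hDD hE hE', hswap]
    noncomm_ring
  rw [hinner, map_add, map_neg, hDbar.map_mul_of_mem_one hb, hDbar.map_mul_of_mem_one ha,
    hDbar.map_mul_of_mem_one ha, hDbarDbar, hDbarDbar, chernCurvature]
  noncomm_ring

end Chern

section RankTwo

variable {A : Type*} [Ring A]

/-- The metric `!![1, 0; f, E]`, the lower triangular factor of `!![1, p; f, f * p + E]`. -/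
def lowerFactor (f : A) (E : Aˣ) : (Matrix (Fin 2) (Fin 2) A)ˣ where
  val := !![1, 0; f, E]
  inv := !![1, 0; -(↑E⁻¹ * f), ↑E⁻¹]
  val_inv := by simp [one_fin_two]
  inv_val := by simp [one_fin_two]

/-- The change of frame `!![1, p; 0, 1]`, the upper factor of `!![1, p; f, f * p + E]`. -/
def upperFactor (p : A) : (Matrix (Fin 2) (Fin 2) A)ˣ where
  val := !![1, p; 0, 1]
  inv := !![1, -p; 0, 1]
  val_inv := by simp [one_fin_two]
  inv_val := by simp [one_fin_two]

/-- The curvature of `!![1, p; f, f * p + E]` conjugated by `upperFactor p`, with the Koszul sign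
`∂̄p * (E⁻¹ ∂f) = -(E⁻¹ ∂f * ∂̄p)` already used in the upper left entry. -/
def frameCurvature (D Dbar : A →+ A) (E : Aˣ) (f p : A) : Matrix (Fin 2) (Fin 2) A :=
  !![↑E⁻¹ * D f * Dbar p, Dbar (D p) - Dbar p * chernConnection D E;
    Dbar (↑E⁻¹ * D f), chernCurvature D Dbar E - ↑E⁻¹ * D f * Dbar p]

theorem coe_lowerFactor_mul_upperFactor (f p : A) (E : Aˣ) :
    ((lowerFactor f E * upperFactor p : (Matrix (Fin 2) (Fin 2) A)ˣ) : Matrix (Fin 2) (Fin 2) A) =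
      !![1, p; f, f * p + E] := by
  simp [lowerFactor, upperFactor]

theorem chernConnection_lowerFactor {D : A →+ A} (hD1 : D 1 = 0) (f : A) (E : Aˣ) :
    chernConnection D.mapMatrix (lowerFactor f E) =
      !![0, 0; ↑E⁻¹ * D f, chernConnection D E] := by
  ext i j
  fin_cases i <;> fin_cases j <;>
    simp [chernConnection, lowerFactor, mul_apply, Fin.sum_univ_two, hD1]

theorem mapMatrix_upperFactor_mul_inv {D : A →+ A} (hD1 : D 1 = 0) (p : A) :
    D.mapMatrix (upperFactor p : Matrix (Fin 2) (Fin 2) A) *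
        (↑(upperFactor p)⁻¹ : Matrix (Fin 2) (Fin 2) A) = !![0, D p; 0, 0] := by
  ext i j
  fin_cases i <;> fin_cases j <;> simp [upperFactor, mul_apply, Fin.sum_univ_two, hD1]

variable {σ : Type*} [SetLike σ A] [AddSubgroupClass σ A] {𝒜 : ℕ → σ} {D Dbar : A →+ A}

theorem chernCurvature_lowerFactor_mul_upperFactor [SetLike.GradedMonoid 𝒜]
    (hcomm : IsGradedCommutative 𝒜) (hD : IsGradedDerivation 𝒜 D)
    (hDbar : IsGradedDerivation 𝒜 Dbar) {E : Aˣ} (hE : (E : A) ∈ 𝒜 0)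
    (hE' : (↑E⁻¹ : A) ∈ 𝒜 0) {f p : A} (hf : f ∈ 𝒜 0) (hp : p ∈ 𝒜 0) :
    chernCurvature D.mapMatrix Dbar.mapMatrix (lowerFactor f E * upperFactor p) =
      (↑(upperFactor p)⁻¹ : Matrix (Fin 2) (Fin 2) A) * frameCurvature D Dbar E f p *
        (upperFactor p : Matrix (Fin 2) (Fin 2) A) := by
  have hp' : -p ∈ 𝒜 0 := neg_mem hp
  have h0 (m : ℕ) : (0 : A) ∈ 𝒜 m := zero_mem _
  have h1 : (1 : A) ∈ 𝒜 0 := SetLike.GradedOne.one_mem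
  have hb : chernConnection D E ∈ 𝒜 1 := chernConnection_mem_one hD hE hE'
  have ha : ↑E⁻¹ * D f ∈ 𝒜 1 := SetLike.GradedMul.mul_mem hE' (hD.map_mem hf)
  have hθ : chernConnection D.mapMatrix (lowerFactor f E) +
      D.mapMatrix (upperFactor p : Matrix (Fin 2) (Fin 2) A) *
        (↑(upperFactor p)⁻¹ : Matrix (Fin 2) (Fin 2) A) =
      !![0, D p; ↑E⁻¹ * D f, chernConnection D E] := by
    rw [chernConnection_lowerFactor hD.map_one, mapMatrix_upperFactor_mul_inv hD.map_one]
    simp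
  have hqa : Dbar p * (↑E⁻¹ * D f) = -(↑E⁻¹ * D f * Dbar p) :=
    hcomm.mul_eq_neg_mul_of_odd odd_one odd_one (hDbar.map_mem hp) ha
  rw [chernCurvature_mul hD.mapMatrix hDbar.mapMatrix (fin_two_mem_matrix h1 (h0 0) hf hE)
      (fin_two_mem_matrix h1 hp (h0 0) h1) (fin_two_mem_matrix h1 hp' (h0 0) h1) hθ
      (fin_two_mem_matrix (h0 1) (hD.map_mem hp) ha hb),
    mapMatrix_upperFactor_mul_inv hDbar.map_one]
  congr 2
  ext i j
  fin_cases i <;> fin_cases j <;> simp [frameCurvature, chernCurvature, hqa]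

theorem trace_frameCurvature (D Dbar : A →+ A) (E : Aˣ) (f p : A) :
    trace (frameCurvature D Dbar E f p) = chernCurvature D Dbar E := by
  simp [frameCurvature, trace_fin_two]

theorem trace_frameCurvature_sq [GradedRing 𝒜] (hcomm : IsGradedCommutative 𝒜)
    (hD : IsGradedDerivation 𝒜 D) (hDbar : IsGradedDerivation 𝒜 Dbar) {E : Aˣ}
    (hE : (E : A) ∈ 𝒜 0) {f p : A} (hf : f ∈ 𝒜 0) (hp : p ∈ 𝒜 0) :
    trace (frameCurvature D Dbar E f p ^ 2) = chernCurvature D Dbar E ^ 2 +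
      2 * (-(chernCurvature D Dbar E * (↑E⁻¹ * D f * Dbar p)) +
        chernConnection D E * (Dbar (↑E⁻¹ * D f) * Dbar p) +
        Dbar (↑E⁻¹ * D f) * Dbar (D p)) := by
  have hE' : (↑E⁻¹ : A) ∈ 𝒜 0 := coe_units_inv_mem_zero 𝒜 hE
  have hq : Dbar p ∈ 𝒜 1 := hDbar.map_mem hp
  have hb : chernConnection D E ∈ 𝒜 1 := chernConnection_mem_one hD hE hE'
  have ha : ↑E⁻¹ * D f ∈ 𝒜 1 := SetLike.GradedMul.mul_mem hE' (hD.map_mem hf)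
  have haq := hcomm.commute_of_even even_two (SetLike.GradedMul.mul_mem ha hq)
  have hs := hcomm.commute_of_even even_two (hDbar.map_mem ha)
  have hsq := hcomm.two_mul_mul_mul_self_of_odd odd_one odd_one ha hq
  have hqb := hcomm.mul_eq_neg_mul_of_odd odd_one odd_one hq hb
  rw [trace_sq_fin_two (haq _) (hs _).symm, trace_frameCurvature]
  simp only [frameCurvature, of_apply, cons_val', cons_val_zero, cons_val_one, cons_val_fin_one]
  set a := ↑E⁻¹ * D f
  set b := chernConnection D E
  set q := Dbar p
  set r := Dbar (D p)
  set s := Dbar a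
  set t := chernCurvature D Dbar E
  have hdiag : a * q * (t - a * q) = t * (a * q) - a * q * (a * q) := by
    rw [(haq _).eq, sub_mul]
  have hoff : (r - q * b) * s = s * r + b * (s * q) := by
    rw [← (hs _).eq, hqb, ← mul_assoc b, ← (hs b).eq]
    noncomm_ring
  linear_combination (norm := noncomm_ring) (-2) * hdiag + 2 * hoff + hsq

theorem commute_upperFactor [GradedRing 𝒜] (hcomm : IsGradedCommutative 𝒜) {p : A}
    (hp : p ∈ 𝒜 0) (i j : Fin 2) (x : A) :
    Commute ((upperFactor p : Matrix (Fin 2) (Fin 2) A) i j) x := by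
  have hmem : (upperFactor p : Matrix (Fin 2) (Fin 2) A) ∈ (AddSubmonoid.ofClass (𝒜 0)).matrix :=
    fin_two_mem_matrix SetLike.GradedOne.one_mem hp (zero_mem _) SetLike.GradedOne.one_mem
  exact hcomm.commute_of_even Even.zero (hmem i j) x

end RankTwo

theorem bott_chern_rank_two_identity_general {A σ : Type*} [Ring A] [SetLike σ A]
    [AddSubgroupClass σ A] {𝒜 : ℕ → σ} [GradedRing 𝒜] (hcomm : IsGradedCommutative 𝒜)
    {D Dbar : A →+ A} (hD : IsGradedDerivation 𝒜 D) (hDbar : IsGradedDerivation 𝒜 Dbar)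
    (hDD : ∀ x, D (D x) = 0) (hDbarDbar : ∀ x, Dbar (Dbar x) = 0)
    (hDDbar : ∀ x, D (Dbar x) + Dbar (D x) = 0) {E : Aˣ} (hE : (E : A) ∈ 𝒜 0) {f p : A}
    (hf : f ∈ 𝒜 0) (hp : p ∈ 𝒜 0) {h : (Matrix (Fin 2) (Fin 2) A)ˣ}
    (hh : (h : Matrix (Fin 2) (Fin 2) A) = !![1, p; f, f * p + E]) :
    trace (chernCurvature D.mapMatrix Dbar.mapMatrix h ^ 2) - chernCurvature D Dbar E ^ 2 =
      2 * Dbar (D (↑E⁻¹ * D f * Dbar p)) := by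
  have hE' : (↑E⁻¹ : A) ∈ 𝒜 0 := coe_units_inv_mem_zero 𝒜 hE
  obtain rfl : h = lowerFactor f E * upperFactor p :=
    Units.ext (hh.trans (coe_lowerFactor_mul_upperFactor f p E).symm)
  rw [chernCurvature_lowerFactor_mul_upperFactor hcomm hD hDbar hE hE' hf hp, Units.conj_pow',
    trace_units_conj_of_commute _ (commute_upperFactor hcomm hp),
    trace_frameCurvature_sq hcomm hD hDbar hE hf hp, add_sub_cancel_left,
    map_map_units_inv_mul_map_mul_map hD hDbar hDD hDbarDbar hDDbar hE hE' hf]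

/-- the rank-2 identity of Remark 3.4 of the paper.
In an `ℕ`-graded graded-commutative `ℚ`-algebra `A` with anticommuting
square-zero degree-`+1` graded derivations `∂ = D` and `∂̄ = Dbar`, let
`E ∈ A₀` be invertible (with inverse `E'`), `f, p ∈ A₀`, let `h` be the
`2 × 2` matrix with rows `(1, p)` and `(f, f·p + E)` (invertible with
inverse `hinv`), and `Θ = ∂̄(h⁻¹·∂h)`.  Then
`trace(Θ·Θ) - (∂̄(E⁻¹·∂E))² = 2·∂̄(∂(E⁻¹·∂f·∂̄p))`. -/
theorem bott_chern_rank_two_identity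
    {A : Type*} [Ring A] [Algebra ℚ A]
    (𝒜 : ℕ → Submodule ℚ A) [GradedAlgebra 𝒜]
    (hcomm : ∀ (m m' : ℕ) (x y : A), x ∈ 𝒜 m → y ∈ 𝒜 m' →
      x * y = ((-1 : ℤ) ^ (m * m')) • (y * x))
    (D Dbar : A →ₗ[ℚ] A)
    (hDdeg : ∀ (m : ℕ) (x : A), x ∈ 𝒜 m → D x ∈ 𝒜 (m + 1))
    (hDbardeg : ∀ (m : ℕ) (x : A), x ∈ 𝒜 m → Dbar x ∈ 𝒜 (m + 1))
    (hDleib : ∀ (m : ℕ) (x y : A), x ∈ 𝒜 m →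
      D (x * y) = D x * y + ((-1 : ℤ) ^ m) • (x * D y))
    (hDbarleib : ∀ (m : ℕ) (x y : A), x ∈ 𝒜 m →
      Dbar (x * y) = Dbar x * y + ((-1 : ℤ) ^ m) • (x * Dbar y))
    (hDD : ∀ x, D (D x) = 0)
    (hDbarDbar : ∀ x, Dbar (Dbar x) = 0)
    (hDDbar : ∀ x, D (Dbar x) + Dbar (D x) = 0)
    (E E' : A) (hE : E ∈ 𝒜 0) (hEE' : E * E' = 1) (hE'E : E' * E = 1)
    (f p : A) (hf : f ∈ 𝒜 0) (hp : p ∈ 𝒜 0)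
    (h : Matrix (Fin 2) (Fin 2) A)
    (hmat : h = Matrix.of ![![1, p], ![f, f * p + E]])
    (hinv : Matrix (Fin 2) (Fin 2) A)
    (hinvl : hinv * h = 1) (hinvr : h * hinv = 1)
    (Θ : Matrix (Fin 2) (Fin 2) A)
    (hΘ : Θ = (hinv * h.map ⇑D).map ⇑Dbar) :
    Matrix.trace (Θ * Θ) - (Dbar (E' * D E)) ^ 2
      = 2 * Dbar (D (E' * D f * Dbar p)) := by
  rw [hΘ, ← sq]
  exact bott_chern_rank_two_identity_general (D := D.toAddMonoidHom) (Dbar := Dbar.toAddMonoidHom)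
    hcomm ⟨hDdeg _ _, hDleib _ _ _⟩ ⟨hDbardeg _ _, hDbarleib _ _ _⟩ hDD hDbarDbar hDDbar
    (E := ⟨E, E', hEE', hE'E⟩) hE hf hp (h := ⟨h, hinv, hinvr, hinvl⟩) hmat
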